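/- Let ((v_k(t))_{k≥1,t∈[0,T]}, r) be a solution of the integrated Burgers control problem such that Σ_{k≥1} v_k(t) = 1 for every t ∈ [0,T], with 0 < Σ_{k≥1} k v_k(0) < ∞ and Σ_{k≥1} k³ v_k(0) < ∞, T ≥ T_gel := (Σ_k k v_k(0))^{−1}, and r(t) = 0 for all t ∈ [0, T_gel]. Then for every x̄ > 0 there exists a constant C < ∞ such that |∂_x E(T_gel, x)| ≤ C·x^{−1/2} for all x ∈ (0, x̄], where E(t,x) := −(∂_x V(t,x))³ / ∂_x² V(t,x). -/

import Mathlib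

open MeasureTheory Filter Topology Set

/-- The generating function of the time-dependent cluster size distribution
`(v_k(t))_{k ≥ 1}`: `V(t,x) = ∑_{k≥1} v_k(t) e^(−kx) − 1`. -/
noncomputable def genFun (v : ℕ → ℝ → ℝ) (t x : ℝ) : ℝ :=
  (∑' k : ℕ, v (k + 1) t * Real.exp (-((k : ℝ) + 1) * x)) - 1

/-- `(v, r)` is a solution of the integrated Burgers control problem on `[0, T]`:
the `v_k(t)` are nonnegative with total mass at most one, `r` is nondecreasing on
`[0, T]` with `r 0 = 0`, `r T ≤ 1 + T/2`, and the generating function satisfies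
`V(t,x) − V(0,x) + ∫₀ᵗ V(s,x)·∂ₓV(s,x) ds = e^(−x)·r(t)` for `t ∈ [0,T]`, `x > 0`. -/
def IsBurgersSolution (T : ℝ) (v : ℕ → ℝ → ℝ) (r : ℝ → ℝ) : Prop :=
  (∀ k, 1 ≤ k → ∀ t ∈ Set.Icc (0:ℝ) T, 0 ≤ v k t) ∧
  (∀ t ∈ Set.Icc (0:ℝ) T, Summable (fun k : ℕ => v (k + 1) t)) ∧
  (∀ t ∈ Set.Icc (0:ℝ) T, (∑' k : ℕ, v (k + 1) t) ≤ 1) ∧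
  MonotoneOn r (Set.Icc 0 T) ∧
  r 0 = 0 ∧
  (∀ t ∈ Set.Icc (0:ℝ) T, 0 ≤ r t) ∧
  r T ≤ 1 + T / 2 ∧
  (∀ t ∈ Set.Icc (0:ℝ) T, ∀ x : ℝ, 0 < x →
    genFun v t x - genFun v 0 x
        + ∫ s in (0:ℝ)..t, genFun v s x * deriv (genFun v s) x
      = Real.exp (-x) * r t)

/-- `E(t,x) = −(∂ₓV(t,x))³ / ∂ₓ²V(t,x)`. -/
noncomputable def EFun (v : ℕ → ℝ → ℝ) (t x : ℝ) : ℝ :=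
  -(deriv (genFun v t) x) ^ 3 / iteratedDeriv 2 (genFun v t) x

/-!
The solution is transported along the characteristics `y ↦ y + t V(0,y)`, on which `V` is constant;
differentiating this twice, `E` is constant on them as well. At the gelation time the
characteristic map `φ` satisfies `φ(y) = O(y²)` and `φ'(y) ≥ y e⁻ʸ`, so differentiating
`E(T_gel, φ(y)) = E(0, y)` gives `|∂ₓE(T_gel, φ(y))| ≤ K / y = O(φ(y)^(-1/2))`, where
`|∂ₓE(0, y)| ≤ K e⁻ʸ` by the third moment.
-/

open scoped NNReal

section Parametric

/-- The primitive need not be continuous: where `f` is not integrable it takes the junk value `0`.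
It is Lipschitz on the order-connected set where `f` is integrable, and `0` off that set. -/
theorem aestronglyMeasurable_primitive {E : Type*} [NormedAddCommGroup E] [NormedSpace ℝ E]
    {f : ℝ → E} {a b : ℝ} {M : ℝ≥0} (hf : ∀ s ∈ Icc a b, ‖f s‖ ≤ M) :
    AEStronglyMeasurable (fun t => ∫ s in a..t, f s) (volume.restrict (Icc a b)) := by
  set S : Set ℝ := {t ∈ Icc a b | IntervalIntegrable f volume a t}
  have hS : S.OrdConnected := by
    refine ⟨fun x hx y hy z hz => ⟨⟨hx.1.1.trans hz.1, hz.2.trans hy.1.2⟩, hy.2.mono_set ?_⟩⟩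
    rw [uIcc_of_le (hx.1.1.trans hz.1), uIcc_of_le hy.1.1]
    exact Icc_subset_Icc_right hz.2
  have hlip : LipschitzOnWith M (fun t => ∫ s in a..t, f s) S := by
    refine LipschitzOnWith.of_dist_le_mul fun x hx y hy => ?_
    rw [dist_eq_norm, intervalIntegral.integral_interval_sub_left hx.2 hy.2]
    exact intervalIntegral.norm_integral_le_of_norm_le_const fun s hs =>
      hf s (uIcc_subset_Icc hy.1 hx.1 (uIoc_subset_uIcc hs))
  have hind : AEStronglyMeasurable (S.indicator fun t => ∫ s in a..t, f s)
      (volume.restrict (Icc a b)) :=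
    ((aestronglyMeasurable_indicator_iff hS.measurableSet).2
      (hlip.continuousOn.aestronglyMeasurable hS.measurableSet)).restrict
  refine hind.congr ?_
  filter_upwards [ae_restrict_mem measurableSet_Icc] with t ht
  by_cases htS : t ∈ S
  · exact indicator_of_mem htS _
  · rw [indicator_of_notMem htS, intervalIntegral.integral_undef fun hint => htS ⟨ht, hint⟩]

theorem aestronglyMeasurable_deriv_param {α : Type*} [MeasurableSpace α] {μ : Measure α}
    {f : α → ℝ → ℝ} {x : ℝ} (hf : ∀ y, x ≤ y → AEStronglyMeasurable (fun t => f t y) μ)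
    (hd : ∀ᵐ t ∂μ, DifferentiableAt ℝ (f t) x) :
    AEStronglyMeasurable (fun t => deriv (f t) x) μ := by
  obtain ⟨u, -, hu_pos, hu⟩ := exists_seq_strictAnti_tendsto (0 : ℝ)
  refine aestronglyMeasurable_of_tendsto_ae atTop
    (f := fun n t => (u n)⁻¹ • (f t (x + u n) - f t x)) (fun n => ?_) ?_
  · exact ((hf _ (by linarith [hu_pos n])).sub (hf x le_rfl)).const_smul (u n)⁻¹
  · filter_upwards [hd] with t ht
    exact ht.hasDerivAt.tendsto_slope_zero.comp
      (tendsto_nhdsWithin_iff.2 ⟨hu, .of_forall fun n => (hu_pos n).ne'⟩)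

theorem abs_slope_sub_deriv_le {f : ℝ → ℝ} {x h : ℝ} {K : ℝ≥0} (hh : 0 < h)
    (hf : ∀ y, x ≤ y → DifferentiableAt ℝ f y) (hK : LipschitzOnWith K (deriv f) (Ici x)) :
    |(f (x + h) - f x) / h - deriv f x| ≤ K * h := by
  obtain ⟨ξ, ⟨hxξ, hξh⟩, hξ⟩ := exists_deriv_eq_slope f (lt_add_of_pos_right x hh)
    (fun y hy => (hf y hy.1).continuousAt.continuousWithinAt)
    (fun y hy => (hf y hy.1.le).differentiableWithinAt)
  rw [add_sub_cancel_left] at hξ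
  rw [← hξ, ← Real.dist_eq]
  refine (hK.dist_le_mul ξ hxξ.le x self_mem_Ici).trans ?_
  rw [Real.dist_eq, abs_of_pos (sub_pos.2 hxξ)]
  gcongr
  linarith

theorem continuousOn_deriv_param {α : Type*} [TopologicalSpace α] {S : Set α} {f : α → ℝ → ℝ}
    {x : ℝ} {K : ℝ≥0} (hd : ∀ t ∈ S, ∀ y, x ≤ y → DifferentiableAt ℝ (f t) y)
    (hK : ∀ t ∈ S, LipschitzOnWith K (deriv (f t)) (Ici x))
    (hf : ∀ y, x ≤ y → ContinuousOn (fun t => f t y) S) :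
    ContinuousOn (fun t => deriv (f t) x) S := by
  have hunif : TendstoUniformlyOn (fun h t => (f t (x + h) - f t x) / h)
      (fun t => deriv (f t) x) (𝓝[>] 0) S := by
    rw [Metric.tendstoUniformlyOn_iff]
    intro ε hε
    have hlim : Tendsto (fun h : ℝ => K * h) (𝓝[>] 0) (𝓝 (K * 0)) :=
      (by fun_prop : Continuous fun h : ℝ => (K : ℝ) * h).continuousWithinAt
    have hsmall : ∀ᶠ h : ℝ in 𝓝[>] 0, K * h < ε := hlim.eventually_lt_const (by simpa using hε)
    filter_upwards [hsmall, self_mem_nhdsWithin] with h hlt hpos t ht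
    rw [dist_comm, Real.dist_eq]
    exact (abs_slope_sub_deriv_le hpos (hd t ht) (hK t ht)).trans_lt hlt
  refine hunif.continuousOn (Eventually.frequently ?_)
  filter_upwards [self_mem_nhdsWithin] with h hpos
  exact ((hf _ (le_add_of_nonneg_right (le_of_lt hpos))).sub (hf x le_rfl)).div_const h

end Parametric

/-- `V` solves the integrated inviscid Burgers equation `V(t,x) − V(0,x) + ∫₀ᵗ V ∂ₓV ds = 0` on
`[0, τ] × (0, ∞)`. Regularity is asked for in `x` only, uniformly in `t` on half-lines away from
`0`; regularity in `t` is a consequence of the equation. -/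
structure IsInviscidBurgersSolution (τ : ℝ) (V : ℝ → ℝ → ℝ) : Prop where
  differentiableAt : ∀ t ∈ Icc 0 τ, ∀ x, 0 < x → DifferentiableAt ℝ (V t) x
  exists_bound : ∀ d > 0, ∃ K : ℝ≥0, ∀ t ∈ Icc 0 τ, ∀ x ∈ Ici d,
    |V t x| ≤ K ∧ |deriv (V t) x| ≤ K
  exists_lipschitz : ∀ d > 0, ∃ K : ℝ≥0, ∀ t ∈ Icc 0 τ, LipschitzOnWith K (deriv (V t)) (Ici d)
  integral_eq : ∀ t ∈ Icc 0 τ, ∀ x, 0 < x →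
    V t x - V 0 x + ∫ s in (0 : ℝ)..t, V s x * deriv (V s) x = 0

namespace IsInviscidBurgersSolution

variable {τ : ℝ} {V : ℝ → ℝ → ℝ}

theorem exists_flux_bound (h : IsInviscidBurgersSolution τ V) {d : ℝ} (hd : 0 < d) :
    ∃ K : ℝ≥0, ∀ t ∈ Icc 0 τ, ∀ x ∈ Ici d, ‖V t x * deriv (V t) x‖ ≤ K := by
  obtain ⟨K, hK⟩ := h.exists_bound d hd
  refine ⟨K * K, fun t ht x hx => ?_⟩
  rw [norm_mul, NNReal.coe_mul]
  exact mul_le_mul (hK t ht x hx).1 (hK t ht x hx).2 (norm_nonneg _) K.2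

theorem exists_flux_lipschitz (h : IsInviscidBurgersSolution τ V) {d : ℝ} (hd : 0 < d) :
    ∃ K : ℝ, ∀ t ∈ Icc 0 τ, ∀ x ∈ Ici d, ∀ y ∈ Ici d,
      ‖V t y * deriv (V t) y - V t x * deriv (V t) x‖ ≤ K * |y - x| := by
  obtain ⟨K, hK⟩ := h.exists_bound d hd
  obtain ⟨L, hL⟩ := h.exists_lipschitz d hd
  refine ⟨K * L + K * K, fun t ht x hx y hy => ?_⟩
  have hV : |V t y - V t x| ≤ K * |y - x| :=
    (convex_Ici d).norm_image_sub_le_of_norm_deriv_le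
      (fun z hz => h.differentiableAt t ht z (hd.trans_le hz)) (fun z hz => (hK t ht z hz).2) hx hy
  have hV' : |deriv (V t) y - deriv (V t) x| ≤ L * |y - x| := (hL t ht).dist_le_mul y hy x hx
  calc ‖V t y * deriv (V t) y - V t x * deriv (V t) x‖
      = |V t y * (deriv (V t) y - deriv (V t) x) + (V t y - V t x) * deriv (V t) x| := by
        rw [Real.norm_eq_abs]; ring_nf
    _ ≤ |V t y| * |deriv (V t) y - deriv (V t) x| + |V t y - V t x| * |deriv (V t) x| := by
        rw [← abs_mul, ← abs_mul]; exact abs_add_le _ _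
    _ ≤ K * (L * |y - x|) + K * |y - x| * K := by
        gcongr
        exacts [(hK t ht y hy).1, (hK t ht x hx).2]
    _ = (K * L + K * K) * |y - x| := by ring

theorem integrableOn_flux (h : IsInviscidBurgersSolution τ V) {x : ℝ} (hx : 0 < x) :
    IntegrableOn (fun s => V s x * deriv (V s) x) (Icc 0 τ) := by
  have hV : ∀ y, x ≤ y → AEStronglyMeasurable (fun t => V t y) (volume.restrict (Icc 0 τ)) := by
    intro y hy
    have hy0 := hx.trans_le hy
    obtain ⟨K, hK⟩ := h.exists_flux_bound hy0
    refine ((aestronglyMeasurable_const (b := V 0 y)).sub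
      (aestronglyMeasurable_primitive fun s hs => hK s hs y self_mem_Ici)).congr ?_
    filter_upwards [ae_restrict_mem measurableSet_Icc] with t ht
    simp only [Pi.sub_apply]
    linarith [h.integral_eq t ht y hy0]
  have hV' : AEStronglyMeasurable (fun t => deriv (V t) x) (volume.restrict (Icc 0 τ)) := by
    refine aestronglyMeasurable_deriv_param hV ?_
    filter_upwards [ae_restrict_mem measurableSet_Icc] with t ht
    exact h.differentiableAt t ht x hx
  obtain ⟨K, hK⟩ := h.exists_flux_bound hx
  refine Integrable.of_bound ((hV x le_rfl).mul hV') K ?_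
  filter_upwards [ae_restrict_mem measurableSet_Icc] with t ht
  exact hK t ht x self_mem_Ici

theorem intervalIntegrable_flux (h : IsInviscidBurgersSolution τ V) {x s t : ℝ} (hx : 0 < x)
    (hs : s ∈ Icc 0 τ) (ht : t ∈ Icc 0 τ) :
    IntervalIntegrable (fun u => V u x * deriv (V u) x) volume s t :=
  ((h.integrableOn_flux hx).mono_set (uIcc_subset_Icc hs ht)).intervalIntegrable

theorem sub_eq_neg_integral (h : IsInviscidBurgersSolution τ V) {x s t : ℝ} (hx : 0 < x)
    (hs : s ∈ Icc 0 τ) (ht : t ∈ Icc 0 τ) :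
    V t x - V s x = -∫ u in s..t, V u x * deriv (V u) x := by
  have h0 : (0 : ℝ) ∈ Icc 0 τ := ⟨le_rfl, hs.1.trans hs.2⟩
  rw [← intervalIntegral.integral_interval_sub_left (h.intervalIntegrable_flux hx h0 ht)
    (h.intervalIntegrable_flux hx h0 hs)]
  linarith [h.integral_eq s hs x hx, h.integral_eq t ht x hx]

theorem continuousOn (h : IsInviscidBurgersSolution τ V) {x : ℝ} (hx : 0 < x) :
    ContinuousOn (fun t => V t x) (Icc 0 τ) := by
  rcases lt_or_ge τ 0 with hτ | hτ
  · simp [Icc_eq_empty_of_lt hτ]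
  have hprim := intervalIntegral.continuousOn_primitive_interval
    ((uIcc_of_le hτ).symm ▸ h.integrableOn_flux hx)
  rw [uIcc_of_le hτ] at hprim
  refine (continuousOn_const (c := V 0 x).sub hprim).congr fun t ht => ?_
  rw [Pi.sub_apply]
  linarith [h.integral_eq t ht x hx]

theorem continuousOn_deriv (h : IsInviscidBurgersSolution τ V) {x : ℝ} (hx : 0 < x) :
    ContinuousOn (fun t => deriv (V t) x) (Icc 0 τ) := by
  obtain ⟨K, hK⟩ := h.exists_lipschitz x hx
  exact continuousOn_deriv_param (fun t ht y hy => h.differentiableAt t ht y (hx.trans_le hy)) hK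
    fun y hy => h.continuousOn (hx.trans_le hy)

theorem hasDerivWithinAt_time (h : IsInviscidBurgersSolution τ V) {x t : ℝ} (hx : 0 < x)
    (ht : t ∈ Icc 0 τ) :
    HasDerivWithinAt (fun s => V s x) (-(V t x * deriv (V t) x)) (Icc 0 τ) t := by
  have := Fact.mk ht
  have hprim := intervalIntegral.integral_hasDerivWithinAt_right
    (h.intervalIntegrable_flux hx ⟨le_rfl, ht.1.trans ht.2⟩ ht) (s := Icc 0 τ) (t := Icc 0 τ)
    ⟨Icc 0 τ, self_mem_nhdsWithin, (h.integrableOn_flux hx).aestronglyMeasurable⟩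
    (((h.continuousOn hx).mul (h.continuousOn_deriv hx)) t ht)
  refine (hprim.const_sub (V 0 x)).congr_of_mem (fun s hs => ?_) ht
  linarith [h.integral_eq s hs x hx]

theorem exists_abs_mixed_difference_le (h : IsInviscidBurgersSolution τ V) {d : ℝ} (hd : 0 < d) :
    ∃ K : ℝ, ∀ s ∈ Icc 0 τ, ∀ t ∈ Icc 0 τ, ∀ x ∈ Ici d, ∀ y ∈ Ici d,
      |(V s y - V t y) - (V s x - V t x)| ≤ K * |y - x| * |s - t| := by
  obtain ⟨K, hK⟩ := h.exists_flux_lipschitz hd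
  refine ⟨K, fun s hs t ht x hx y hy => ?_⟩
  have hx0 : 0 < x := hd.trans_le hx
  have hy0 : 0 < y := hd.trans_le hy
  rw [h.sub_eq_neg_integral hx0 ht hs, h.sub_eq_neg_integral hy0 ht hs, neg_sub_neg, abs_sub_comm,
    ← intervalIntegral.integral_sub (h.intervalIntegrable_flux hy0 ht hs)
      (h.intervalIntegrable_flux hx0 ht hs)]
  exact intervalIntegral.norm_integral_le_of_norm_le_const fun u hu =>
    hK u (uIcc_subset_Icc ht hs (uIoc_subset_uIcc hu)) x hx y hy

theorem hasDerivWithinAt_line (h : IsInviscidBurgersSolution τ V) {x t : ℝ} (c : ℝ) (hx : 0 < x)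
    (ht : t ∈ Icc 0 τ) :
    HasDerivWithinAt (fun s => V s (x + (s - t) * c)) (deriv (V t) x * (c - V t x))
      (Icc 0 τ) t := by
  have hline : HasDerivAt (fun s => x + (s - t) * c) c t := by
    simpa using (((hasDerivAt_id t).sub_const t).mul_const c).const_add x
  have hspace : HasDerivAt (fun s => V t (x + (s - t) * c)) (deriv (V t) x * c) t := by
    refine HasDerivAt.comp t (h₂ := V t) ?_ hline
    simpa using (h.differentiableAt t ht x hx).hasDerivAt
  -- The mixed difference is `O((s - t)²)`: this replaces joint differentiability of `V`.
  have hmixed : HasDerivWithinAt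
      (fun s => (V s (x + (s - t) * c) - V t (x + (s - t) * c)) - (V s x - V t x)) 0
      (Icc 0 τ) t := by
    obtain ⟨K, hK⟩ := h.exists_abs_mixed_difference_le (half_pos hx)
    have hnear : ∀ᶠ s in 𝓝[Icc 0 τ] t, x / 2 ≤ x + (s - t) * c :=
      nhdsWithin_le_nhds (hline.continuousAt.eventually_const_le (by simp [hx]))
    have hO : (fun s => (V s (x + (s - t) * c) - V t (x + (s - t) * c)) - (V s x - V t x))
        =O[𝓝[Icc 0 τ] t] fun s => ‖s - t‖ ^ 2 := by
      refine .of_bound (K * |c|) ?_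
      filter_upwards [hnear, self_mem_nhdsWithin] with s hsx hs
      refine (hK s hs t ht x (half_le_self hx.le) _ hsx).trans_eq ?_
      rw [add_sub_cancel_left, abs_mul, norm_pow, norm_norm, Real.norm_eq_abs]
      ring
    simpa using (hO.hasFDerivWithinAt ht one_lt_two).hasDerivWithinAt
  refine ((hmixed.add hspace.hasDerivWithinAt).add
    ((h.hasDerivWithinAt_time hx ht).sub_const (V t x))).congr_deriv (by ring) |>.congr_of_mem
    (fun s _ => ?_) ht
  simp only [Pi.add_apply]
  ring

theorem eq_along_characteristic (h : IsInviscidBurgersSolution τ V) (hτ : 0 ≤ τ) {x : ℝ}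
    (hx : 0 < x) (hxτ : 0 < x + τ * V 0 x) : V τ (x + τ * V 0 x) = V 0 x := by
  set c := V 0 x
  set d := min x (x + τ * c)
  have hd : 0 < d := lt_min hx hxτ
  have hline : ∀ t ∈ Icc 0 τ, d ≤ x + t * c := by
    intro t ht
    rcases le_total 0 c with hc | hc
    · exact (min_le_left _ _).trans (le_add_of_nonneg_right (mul_nonneg ht.1 hc))
    · exact (min_le_right _ _).trans (by gcongr x + ?_; exact mul_le_mul_of_nonpos_right ht.2 hc)
  have hderiv : ∀ t ∈ Icc 0 τ, HasDerivWithinAt (fun s => V s (x + s * c) - c)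
      (deriv (V t) (x + t * c) * (c - V t (x + t * c))) (Icc 0 τ) t := by
    intro t ht
    refine ((h.hasDerivWithinAt_line c (hd.trans_le (hline t ht)) ht).sub_const c).congr_of_mem
      (fun s _ => ?_) ht
    ring_nf
  obtain ⟨K, hK⟩ := h.exists_bound d hd
  have hzero := eq_zero_of_abs_deriv_le_mul_abs_self_of_eq_zero_right (K := K)
    (fun t ht => (hderiv t ht).continuousWithinAt)
    (fun t ht => (hderiv t (Ico_subset_Icc_self ht)).mono_of_mem_nhdsWithin
      (Icc_mem_nhdsGE_of_mem ht)) (by simp [c]) (fun t ht => ?_) τ (right_mem_Icc.2 hτ)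
  · exact sub_eq_zero.1 hzero
  · have htI := Ico_subset_Icc_self ht
    rw [norm_mul, norm_sub_rev c]
    gcongr
    exact (hK t htI _ (hline t htI)).2

end IsInviscidBurgersSolution

section ExpMoment

/-- `∑ (k+1)ʲ aₖ e^{−(k+1)x}`. With `aₖ = v_{k+1}(t)` it is, up to the sign `(−1)ʲ`, the `j`-th
derivative in `x` of the generating function `∑ v_k(t) e^{−kx}`, and its value at `x = 0` is the
`j`-th moment of the cluster sizes. -/
noncomputable def expMoment (a : ℕ → ℝ) (j : ℕ) (x : ℝ) : ℝ :=
  ∑' k : ℕ, ((k : ℝ) + 1) ^ j * a k * Real.exp (-((k : ℝ) + 1) * x)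

theorem pow_mul_exp_neg_mul_le {z d : ℝ} (hz : 0 ≤ z) (hd : 0 < d) (j : ℕ) :
    z ^ j * Real.exp (-z * d) ≤ j.factorial / d ^ j := by
  have h := Real.pow_div_factorial_le_exp (z * d) (by positivity) j
  rw [div_le_iff₀ (by positivity), mul_pow] at h
  rw [neg_mul, Real.exp_neg, ← div_eq_mul_inv, div_le_div_iff₀ (Real.exp_pos _) (by positivity)]
  linarith

variable {a : ℕ → ℝ}

theorem norm_expMoment_term_le (a : ℕ → ℝ) (j k : ℕ) {d x : ℝ} (hd : 0 < d) (hx : d ≤ x) :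
    ‖((k : ℝ) + 1) ^ j * a k * Real.exp (-((k : ℝ) + 1) * x)‖ ≤ j.factorial / d ^ j * |a k| := by
  have hk : (0 : ℝ) ≤ k + 1 := by positivity
  have hexp : Real.exp (-((k : ℝ) + 1) * x) ≤ Real.exp (-((k : ℝ) + 1) * d) :=
    Real.exp_le_exp.2 (mul_le_mul_of_nonpos_left hx (neg_nonpos.2 hk))
  calc ‖((k : ℝ) + 1) ^ j * a k * Real.exp (-((k : ℝ) + 1) * x)‖
      = ((k : ℝ) + 1) ^ j * Real.exp (-((k : ℝ) + 1) * x) * |a k| := by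
        rw [Real.norm_eq_abs, abs_mul, abs_mul, abs_pow, abs_of_nonneg hk, Real.abs_exp]; ring
    _ ≤ ((k : ℝ) + 1) ^ j * Real.exp (-((k : ℝ) + 1) * d) * |a k| := by gcongr
    _ ≤ j.factorial / d ^ j * |a k| := by gcongr; exact pow_mul_exp_neg_mul_le hk hd j

theorem summable_expMoment (ha : Summable a) (j : ℕ) {x : ℝ} (hx : 0 < x) :
    Summable fun k : ℕ => ((k : ℝ) + 1) ^ j * a k * Real.exp (-((k : ℝ) + 1) * x) :=
  .of_norm_bounded (ha.abs.mul_left _) fun k => norm_expMoment_term_le a j k hx le_rfl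

theorem abs_expMoment_le (ha : Summable a) (j : ℕ) {d x : ℝ} (hd : 0 < d) (hx : d ≤ x) :
    |expMoment a j x| ≤ j.factorial / d ^ j * ∑' k, |a k| :=
  tsum_of_norm_bounded (ha.abs.hasSum.mul_left _) fun k => norm_expMoment_term_le a j k hd hx

theorem hasDerivAt_expMoment (ha : Summable a) (j : ℕ) {x : ℝ} (hx : 0 < x) :
    HasDerivAt (expMoment a j) (-expMoment a (j + 1) x) x := by
  have hmem : x ∈ Ioi (x / 2) := half_lt_self hx
  have hterm : ∀ (k : ℕ) (y : ℝ),
      HasDerivAt (fun y => ((k : ℝ) + 1) ^ j * a k * Real.exp (-((k : ℝ) + 1) * y))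
        (-(((k : ℝ) + 1) ^ (j + 1) * a k * Real.exp (-((k : ℝ) + 1) * y))) y := by
    intro k y
    have hexp := ((hasDerivAt_id y).const_mul (-((k : ℝ) + 1))).exp
    exact (hexp.const_mul (((k : ℝ) + 1) ^ j * a k)).congr_deriv (by simp only [id_eq]; ring)
  rw [expMoment, ← tsum_neg]
  exact hasDerivAt_tsum_of_isPreconnected (ha.abs.mul_left _) isOpen_Ioi isPreconnected_Ioi
    (fun k y _ => hterm k y)
    (fun k y hy => (norm_neg _).trans_le
      (norm_expMoment_term_le a (j + 1) k (half_pos hx) (le_of_lt hy)))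
    hmem (summable_expMoment ha j hx) hmem

theorem expMoment_nonneg (ha : ∀ k, 0 ≤ a k) (j : ℕ) (x : ℝ) : 0 ≤ expMoment a j x :=
  tsum_nonneg fun k => mul_nonneg (mul_nonneg (by positivity) (ha k)) (Real.exp_pos _).le

theorem expMoment_pos (ha : ∀ k, 0 ≤ a k) (hs : Summable a) {k : ℕ} (hk : 0 < a k) (j : ℕ) {x : ℝ}
    (hx : 0 < x) : 0 < expMoment a j x :=
  (summable_expMoment hs j hx).tsum_pos
    (fun i => mul_nonneg (mul_nonneg (by positivity) (ha i)) (Real.exp_pos _).le) k (by positivity)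

theorem expMoment_le_expMoment (ha : ∀ k, 0 ≤ a k) (hs : Summable a) {i j : ℕ} (hij : i ≤ j)
    {x : ℝ} (hx : 0 < x) : expMoment a i x ≤ expMoment a j x := by
  refine (summable_expMoment hs i hx).tsum_le_tsum (fun k => ?_) (summable_expMoment hs j hx)
  have := ha k
  gcongr
  exact le_add_of_nonneg_left k.cast_nonneg

theorem expMoment_zero_right (a : ℕ → ℝ) (j : ℕ) :
    expMoment a j 0 = ∑' k : ℕ, ((k : ℝ) + 1) ^ j * a k := by
  simp [expMoment]

theorem expMoment_zero_zero (a : ℕ → ℝ) : expMoment a 0 0 = ∑' k, a k := by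
  simp [expMoment]

theorem summable_pow_mul_of_le (ha : ∀ k, 0 ≤ a k) {i j : ℕ} (hij : i ≤ j)
    (hj : Summable fun k : ℕ => ((k : ℝ) + 1) ^ j * a k) :
    Summable fun k : ℕ => ((k : ℝ) + 1) ^ i * a k := by
  refine hj.of_nonneg_of_le (fun k => mul_nonneg (by positivity) (ha k)) fun k => ?_
  refine mul_le_mul_of_nonneg_right (pow_le_pow_right₀ ?_ hij) (ha k)
  exact le_add_of_nonneg_left k.cast_nonneg

theorem summable_of_summable_pow_mul (ha : ∀ k, 0 ≤ a k) {j : ℕ}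
    (hj : Summable fun k : ℕ => ((k : ℝ) + 1) ^ j * a k) : Summable a := by
  simpa using summable_pow_mul_of_le ha j.zero_le hj

theorem expMoment_le_exp_neg_mul (ha : ∀ k, 0 ≤ a k) {j : ℕ}
    (hj : Summable fun k : ℕ => ((k : ℝ) + 1) ^ j * a k) {x : ℝ} (hx : 0 < x) :
    expMoment a j x ≤ Real.exp (-x) * expMoment a j 0 := by
  rw [expMoment_zero_right, ← tsum_mul_left]
  refine (summable_expMoment (summable_of_summable_pow_mul ha hj) j hx).tsum_le_tsum
    (fun k => ?_) (hj.mul_left _)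
  rw [mul_comm]
  refine mul_le_mul_of_nonneg_right (Real.exp_le_exp.2 ?_) (mul_nonneg (by positivity) (ha k))
  linarith [mul_nonneg k.cast_nonneg hx.le]

theorem expMoment_le_expMoment_zero (ha : ∀ k, 0 ≤ a k) {j : ℕ}
    (hj : Summable fun k : ℕ => ((k : ℝ) + 1) ^ j * a k) {x : ℝ} (hx : 0 < x) :
    expMoment a j x ≤ expMoment a j 0 :=
  (expMoment_le_exp_neg_mul ha hj hx).trans (mul_le_of_le_one_left (expMoment_nonneg ha j 0)
    (Real.exp_le_one_iff.2 (neg_nonpos.2 hx.le)))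

theorem hasSum_expMoment_remainder (ha : ∀ k, 0 ≤ a k)
    (h1 : Summable fun k : ℕ => ((k : ℝ) + 1) ^ 1 * a k) {x : ℝ} (hx : 0 < x) :
    HasSum (fun k : ℕ => a k * (((k : ℝ) + 1) * x + Real.exp (-((k : ℝ) + 1) * x) - 1))
      (expMoment a 1 0 * x + expMoment a 0 x - expMoment a 0 0) := by
  have hs := summable_of_summable_pow_mul ha h1
  rw [expMoment_zero_zero, expMoment_zero_right]
  refine (((h1.hasSum.mul_right x).add (summable_expMoment hs 0 hx).hasSum).sub
    hs.hasSum).congr_fun fun k => ?_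
  ring

/-- Termwise this is Bernoulli's inequality for `(1 + (e⁻ˣ − 1)) ^ (k + 1)`. -/
theorem expMoment_remainder_ge (ha : ∀ k, 0 ≤ a k)
    (h1 : Summable fun k : ℕ => ((k : ℝ) + 1) ^ 1 * a k) {x : ℝ} (hx : 0 < x) :
    expMoment a 1 0 * (x + Real.exp (-x) - 1) ≤
      expMoment a 1 0 * x + expMoment a 0 x - expMoment a 0 0 := by
  have hsum := h1.hasSum.mul_right (x + Real.exp (-x) - 1)
  rw [← expMoment_zero_right] at hsum
  refine hasSum_le (fun k => ?_) hsum (hasSum_expMoment_remainder ha h1 hx)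
  have hpow : Real.exp (-((k : ℝ) + 1) * x) = (1 + (Real.exp (-x) - 1)) ^ (k + 1) := by
    rw [add_sub_cancel, ← Real.exp_nat_mul]
    push_cast
    ring_nf
  have hbern := one_add_mul_le_pow
    (show (-2 : ℝ) ≤ Real.exp (-x) - 1 by linarith [Real.exp_pos (-x)]) (k + 1)
  rw [← hpow] at hbern
  push_cast at hbern
  rw [pow_one, mul_comm _ (a k), mul_assoc]
  exact mul_le_mul_of_nonneg_left (by linarith) (ha k)

theorem expMoment_remainder_le (ha : ∀ k, 0 ≤ a k)
    (h2 : Summable fun k : ℕ => ((k : ℝ) + 1) ^ 2 * a k) {x : ℝ} (hx : 0 < x) :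
    expMoment a 1 0 * x + expMoment a 0 x - expMoment a 0 0 ≤ expMoment a 2 0 * x ^ 2 := by
  have hsum := h2.hasSum.mul_right (x ^ 2)
  rw [← expMoment_zero_right] at hsum
  refine hasSum_le (fun k => ?_)
    (hasSum_expMoment_remainder ha (summable_pow_mul_of_le ha one_le_two h2) hx) hsum
  set z := ((k : ℝ) + 1) * x with hz
  have hz0 : 0 < z := by positivity
  have hexp : Real.exp (-z) ≤ 1 - z + z ^ 2 := by
    have hinv : Real.exp (-z) ≤ 1 / (1 + z) := by
      rw [Real.exp_neg, one_div]
      gcongr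
      linarith [Real.add_one_le_exp z]
    refine hinv.trans ((div_le_iff₀ (by positivity)).2 ?_)
    nlinarith [pow_pos hz0 3]
  calc a k * (z + Real.exp (-((k : ℝ) + 1) * x) - 1) = a k * (z + Real.exp (-z) - 1) := by
        rw [hz, neg_mul]
    _ ≤ a k * z ^ 2 := mul_le_mul_of_nonneg_left (by linarith) (ha k)
    _ = ((k : ℝ) + 1) ^ 2 * a k * x ^ 2 := by rw [hz]; ring

theorem hasDerivAt_expMoment_one_pow_three_div (hs : Summable a) {x : ℝ} (hx : 0 < x)
    (h2 : expMoment a 2 x ≠ 0) :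
    HasDerivAt (fun y => expMoment a 1 y ^ 3 / expMoment a 2 y)
      (expMoment a 1 x ^ 3 * expMoment a 3 x / expMoment a 2 x ^ 2 - 3 * expMoment a 1 x ^ 2) x :=
  (((hasDerivAt_expMoment hs 1 hx).pow 3).div (hasDerivAt_expMoment hs 2 hx) h2).congr_deriv (by
    simp only [Pi.pow_apply]
    field_simp
    norm_num
    ring)

/-- The second moment in the denominator is absorbed by the first moments in the numerator. -/
theorem abs_deriv_expMoment_one_pow_three_div_le (ha : ∀ k, 0 ≤ a k) (hs : Summable a) {x : ℝ}
    (hx : 0 < x) :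
    |expMoment a 1 x ^ 3 * expMoment a 3 x / expMoment a 2 x ^ 2 - 3 * expMoment a 1 x ^ 2| ≤
      (3 * expMoment a 1 x + expMoment a 3 x) * expMoment a 1 x := by
  have hD1 := expMoment_nonneg ha 1 x
  have hD3 := expMoment_nonneg ha 3 x
  have hD12 : expMoment a 1 x ^ 2 ≤ expMoment a 2 x ^ 2 :=
    pow_le_pow_left₀ hD1 (expMoment_le_expMoment ha hs one_le_two hx) 2
  have hquot : expMoment a 1 x ^ 3 * expMoment a 3 x / expMoment a 2 x ^ 2 ≤
      expMoment a 1 x * expMoment a 3 x := by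
    refine div_le_of_le_mul₀ (sq_nonneg _) (mul_nonneg hD1 hD3) ?_
    calc expMoment a 1 x ^ 3 * expMoment a 3 x
        = expMoment a 1 x * expMoment a 3 x * expMoment a 1 x ^ 2 := by ring
      _ ≤ expMoment a 1 x * expMoment a 3 x * expMoment a 2 x ^ 2 := by gcongr
  rw [abs_le]
  constructor <;> nlinarith [
    show 0 ≤ expMoment a 1 x ^ 3 * expMoment a 3 x / expMoment a 2 x ^ 2 by positivity]

end ExpMoment

section Characteristics

variable {f g : ℝ → ℝ} {τ y : ℝ}

theorem deriv_mul_one_add_eq_of_comp_eq (hf : DifferentiableAt ℝ f (y + τ * g y))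
    (hg : DifferentiableAt ℝ g y) (h : ∀ᶠ z in 𝓝 y, f (z + τ * g z) = g z) :
    deriv f (y + τ * g y) * (1 + τ * deriv g y) = deriv g y := by
  have hφ : HasDerivAt (fun z => z + τ * g z) (1 + τ * deriv g y) y :=
    (hasDerivAt_id y).add (hg.hasDerivAt.const_mul τ)
  exact ((hf.hasDerivAt.comp y hφ).congr_of_eventuallyEq (h.mono fun _ => Eq.symm)).unique
    hg.hasDerivAt

theorem deriv_deriv_mul_one_add_pow_three_eq_of_comp_eq
    (hf : ∀ᶠ x in 𝓝 (y + τ * g y), DifferentiableAt ℝ f x)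
    (hf' : DifferentiableAt ℝ (deriv f) (y + τ * g y)) (hg : ∀ᶠ z in 𝓝 y, DifferentiableAt ℝ g z)
    (hg' : DifferentiableAt ℝ (deriv g) y) (h : ∀ᶠ z in 𝓝 y, f (z + τ * g z) = g z) :
    deriv (deriv f) (y + τ * g y) * (1 + τ * deriv g y) ^ 3 = deriv (deriv g) y := by
  have hφ : HasDerivAt (fun z => z + τ * g z) (1 + τ * deriv g y) y :=
    (hasDerivAt_id y).add (hg.self_of_nhds.hasDerivAt.const_mul τ)
  have hφ' : HasDerivAt (fun z => 1 + τ * deriv g z) (τ * deriv (deriv g) y) y :=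
    (hg'.hasDerivAt.const_mul τ).const_add 1
  have hfirst : ∀ᶠ z in 𝓝 y, deriv f (z + τ * g z) * (1 + τ * deriv g z) = deriv g z := by
    filter_upwards [hφ.continuousAt.eventually hf, hg, h.eventually_nhds] with z hfz hgz hz
    exact deriv_mul_one_add_eq_of_comp_eq hfz hgz hz
  have hsecond := (((hf'.hasDerivAt.comp y hφ).mul hφ').congr_of_eventuallyEq
    (hfirst.mono fun _ => Eq.symm)).unique hg'.hasDerivAt
  have hf1 := hfirst.self_of_nhds
  simp only [Function.comp_apply] at hsecond
  linear_combination (1 + τ * deriv g y) * hsecond - τ * deriv (deriv g) y * hf1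

end Characteristics

section GelMap

/-- The characteristic map `x ↦ x + τ V(0,x)` of the inviscid Burgers equation at the gelation time
`τ = (∑ (k+1) aₖ)⁻¹`, for the initial datum `V(0,x) = ∑ aₖ (e^{−(k+1)x} − 1)`. -/
noncomputable def gelMap (a : ℕ → ℝ) (x : ℝ) : ℝ :=
  x + (expMoment a 1 0)⁻¹ * (expMoment a 0 x - expMoment a 0 0)

variable {a : ℕ → ℝ}

theorem hasDerivAt_gelMap (hs : Summable a) {x : ℝ} (hx : 0 < x) :
    HasDerivAt (gelMap a) (1 - (expMoment a 1 0)⁻¹ * expMoment a 1 x) x := by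
  have := (hasDerivAt_id x).add
    (((hasDerivAt_expMoment hs 0 hx).sub_const (expMoment a 0 0)).const_mul (expMoment a 1 0)⁻¹)
  exact this.congr_deriv (by ring)

theorem gelMap_eq_div (h : expMoment a 1 0 ≠ 0) (x : ℝ) :
    gelMap a x = (expMoment a 1 0 * x + expMoment a 0 x - expMoment a 0 0) / expMoment a 1 0 := by
  rw [gelMap]
  field_simp
  ring

theorem gelMap_pos (ha : ∀ k, 0 ≤ a k) (h1 : Summable fun k : ℕ => ((k : ℝ) + 1) ^ 1 * a k)
    (hpos : 0 < expMoment a 1 0) {x : ℝ} (hx : 0 < x) : 0 < gelMap a x := by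
  rw [gelMap_eq_div hpos.ne']
  have hexp : 0 < x + Real.exp (-x) - 1 := by
    linarith [Real.add_one_lt_exp (neg_ne_zero.2 hx.ne')]
  exact div_pos ((mul_pos hpos hexp).trans_le (expMoment_remainder_ge ha h1 hx)) hpos

theorem gelMap_le (ha : ∀ k, 0 ≤ a k) (h2 : Summable fun k : ℕ => ((k : ℝ) + 1) ^ 2 * a k)
    (hpos : 0 < expMoment a 1 0) {x : ℝ} (hx : 0 < x) :
    gelMap a x ≤ expMoment a 2 0 / expMoment a 1 0 * x ^ 2 := by
  rw [gelMap_eq_div hpos.ne', div_mul_eq_mul_div]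
  exact div_le_div_of_nonneg_right (expMoment_remainder_le ha h2 hx) hpos.le

theorem mul_exp_neg_le_deriv_gelMap (ha : ∀ k, 0 ≤ a k)
    (h1 : Summable fun k : ℕ => ((k : ℝ) + 1) ^ 1 * a k) (hpos : 0 < expMoment a 1 0) {x : ℝ}
    (hx : 0 < x) : x * Real.exp (-x) ≤ 1 - (expMoment a 1 0)⁻¹ * expMoment a 1 x := by
  have hexp : x * Real.exp (-x) ≤ 1 - Real.exp (-x) := by
    rw [le_sub_iff_add_le, ← add_one_mul, Real.exp_neg, ← div_eq_mul_inv]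
    exact div_le_one_of_le₀ (Real.add_one_le_exp x) (Real.exp_pos x).le
  have hratio : (expMoment a 1 0)⁻¹ * expMoment a 1 x ≤ Real.exp (-x) := by
    rw [inv_mul_le_iff₀ hpos, mul_comm]
    exact expMoment_le_exp_neg_mul ha h1 hx
  linarith

theorem exists_gelMap_eq (ha : ∀ k, 0 ≤ a k) (hs : Summable a) {x : ℝ} (hx : 0 < x) :
    ∃ y, 0 < y ∧ gelMap a y = x := by
  set b := (expMoment a 1 0)⁻¹ * expMoment a 0 0
  have hinv : 0 ≤ (expMoment a 1 0)⁻¹ := inv_nonneg.2 (expMoment_nonneg ha 1 0)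
  have hb : 0 ≤ b := mul_nonneg hinv (expMoment_nonneg ha 0 0)
  have hlow : gelMap a x ≤ x := add_le_of_nonpos_right <| mul_nonpos_of_nonneg_of_nonpos hinv <|
    sub_nonpos.2 (expMoment_le_expMoment_zero ha (by simpa using hs) hx)
  have hhigh : x ≤ gelMap a (x + b) := by
    have := mul_nonneg hinv (expMoment_nonneg ha 0 (x + b))
    simp only [gelMap, mul_sub]
    linarith
  have hcont : ContinuousOn (gelMap a) (Icc x (x + b)) := fun z hz =>
    (hasDerivAt_gelMap hs (hx.trans_le hz.1)).continuousAt.continuousWithinAt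
  obtain ⟨y, hy, hyx⟩ :=
    intermediate_value_Icc (le_add_of_nonneg_right hb) hcont ⟨hlow, hhigh⟩
  exact ⟨y, hx.trans_le hy.1, hyx⟩

end GelMap

section GenFun

variable {v : ℕ → ℝ → ℝ} {t x : ℝ}

theorem genFun_eq_expMoment (v : ℕ → ℝ → ℝ) (t x : ℝ) :
    genFun v t x = expMoment (fun k => v (k + 1) t) 0 x - 1 := by
  simp only [genFun, expMoment, pow_zero, one_mul]

theorem hasDerivAt_genFun (hs : Summable fun k => v (k + 1) t) (hx : 0 < x) :
    HasDerivAt (genFun v t) (-expMoment (fun k => v (k + 1) t) 1 x) x := by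
  rw [funext (genFun_eq_expMoment v t)]
  exact (hasDerivAt_expMoment hs 0 hx).sub_const 1

theorem hasDerivAt_deriv_genFun (hs : Summable fun k => v (k + 1) t) (hx : 0 < x) :
    HasDerivAt (deriv (genFun v t)) (expMoment (fun k => v (k + 1) t) 2 x) x := by
  have h := (hasDerivAt_expMoment hs 1 hx).neg
  rw [neg_neg] at h
  refine h.congr_of_eventuallyEq ?_
  filter_upwards [Ioi_mem_nhds hx] with y hy
  exact (hasDerivAt_genFun hs hy).deriv

theorem eventually_differentiableAt_genFun (hs : Summable fun k => v (k + 1) t) (hx : 0 < x) :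
    ∀ᶠ y in 𝓝 x, DifferentiableAt ℝ (genFun v t) y := by
  filter_upwards [Ioi_mem_nhds hx] with y hy
  exact (hasDerivAt_genFun hs hy).differentiableAt

theorem eventually_add_mul_genFun_pos (hs : Summable fun k => v (k + 1) t) {τ : ℝ} (hx : 0 < x)
    (hxτ : 0 < x + τ * genFun v t x) : ∀ᶠ y in 𝓝 x, 0 < y ∧ 0 < y + τ * genFun v t y :=
  have hcont : ContinuousAt (fun y => y + τ * genFun v t y) x :=
    continuousAt_id.add ((hasDerivAt_genFun hs hx).continuousAt.const_mul τ)
  (eventually_gt_nhds hx).and (hcont.eventually_const_lt hxτ)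

theorem EFun_eq_expMoment (hs : Summable fun k => v (k + 1) t) (hx : 0 < x) :
    EFun v t x =
      expMoment (fun k => v (k + 1) t) 1 x ^ 3 / expMoment (fun k => v (k + 1) t) 2 x := by
  rw [EFun, iteratedDeriv_succ, iteratedDeriv_one, (hasDerivAt_genFun hs hx).deriv,
    (hasDerivAt_deriv_genFun hs hx).deriv]
  ring

theorem hasDerivAt_EFun (hs : Summable fun k => v (k + 1) t) (hx : 0 < x)
    (h2 : expMoment (fun k => v (k + 1) t) 2 x ≠ 0) :
    HasDerivAt (EFun v t)
      (expMoment (fun k => v (k + 1) t) 1 x ^ 3 * expMoment (fun k => v (k + 1) t) 3 x /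
        expMoment (fun k => v (k + 1) t) 2 x ^ 2 - 3 * expMoment (fun k => v (k + 1) t) 1 x ^ 2)
      x := by
  refine (hasDerivAt_expMoment_one_pow_three_div hs hx h2).congr_of_eventuallyEq ?_
  filter_upwards [Ioi_mem_nhds hx] with y hy
  exact EFun_eq_expMoment hs hy

theorem abs_deriv_EFun_le (hv : ∀ k, 0 ≤ v (k + 1) t)
    (h3 : Summable fun k : ℕ => ((k : ℝ) + 1) ^ 3 * v (k + 1) t) (hx : 0 < x)
    (h2 : expMoment (fun k => v (k + 1) t) 2 x ≠ 0) :
    |deriv (EFun v t) x| ≤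
      (3 * expMoment (fun k => v (k + 1) t) 1 0 + expMoment (fun k => v (k + 1) t) 3 0) *
        expMoment (fun k => v (k + 1) t) 1 0 * Real.exp (-x) := by
  have hs := summable_of_summable_pow_mul hv h3
  have h1 := summable_pow_mul_of_le hv (show 1 ≤ 3 by norm_num) h3
  have hnonneg := expMoment_nonneg hv
  rw [(hasDerivAt_EFun hs hx h2).deriv]
  refine (abs_deriv_expMoment_one_pow_three_div_le hv hs hx).trans ?_
  rw [mul_assoc, mul_comm _ (Real.exp (-x))]
  refine mul_le_mul ?_ (expMoment_le_exp_neg_mul hv h1 hx) (hnonneg 1 x) ?_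
  · linarith [expMoment_le_expMoment_zero hv h1 hx, expMoment_le_expMoment_zero hv h3 hx]
  · linarith [hnonneg 1 0, hnonneg 3 0]

end GenFun

namespace IsBurgersSolution

variable {T τ : ℝ} {v : ℕ → ℝ → ℝ} {r : ℝ → ℝ}

theorem nonneg (h : IsBurgersSolution T v r) {t : ℝ} (ht : t ∈ Icc 0 T) (k : ℕ) :
    0 ≤ v (k + 1) t :=
  h.1 (k + 1) k.succ_pos t ht

theorem summable (h : IsBurgersSolution T v r) {t : ℝ} (ht : t ∈ Icc 0 T) :
    Summable fun k => v (k + 1) t :=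
  h.2.1 t ht

theorem tsum_abs_le_one (h : IsBurgersSolution T v r) {t : ℝ} (ht : t ∈ Icc 0 T) :
    ∑' k, |v (k + 1) t| ≤ 1 := by
  simpa only [abs_of_nonneg (h.nonneg ht _)] using h.2.2.1 t ht

theorem genFun_equation (h : IsBurgersSolution T v r) {t : ℝ} (ht : t ∈ Icc 0 T) {x : ℝ}
    (hx : 0 < x) :
    genFun v t x - genFun v 0 x + ∫ s in (0 : ℝ)..t, genFun v s x * deriv (genFun v s) x =
      Real.exp (-x) * r t :=
  h.2.2.2.2.2.2.2 t ht x hx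

theorem abs_expMoment_le (h : IsBurgersSolution T v r) {t : ℝ} (ht : t ∈ Icc 0 T) (j : ℕ)
    {d x : ℝ} (hd : 0 < d) (hx : d ≤ x) :
    |expMoment (fun k => v (k + 1) t) j x| ≤ j.factorial / d ^ j :=
  (_root_.abs_expMoment_le (h.summable ht) j hd hx).trans <|
    mul_le_of_le_one_right (by positivity) (h.tsum_abs_le_one ht)

theorem isInviscidBurgersSolution (h : IsBurgersSolution T v r) (hτ : τ ≤ T)
    (hr : ∀ t ∈ Icc 0 τ, r t = 0) : IsInviscidBurgersSolution τ (genFun v) where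
  differentiableAt t ht x hx :=
    (hasDerivAt_genFun (h.summable ⟨ht.1, ht.2.trans hτ⟩) hx).differentiableAt
  exists_bound d hd := by
    refine ⟨2 + Real.toNNReal (1 / d), fun t ht x hx => ?_⟩
    have htT : t ∈ Icc 0 T := ⟨ht.1, ht.2.trans hτ⟩
    have h0 : |expMoment (fun k => v (k + 1) t) 0 x| ≤ 1 := by
      simpa using h.abs_expMoment_le htT 0 hd hx
    have h1 : |expMoment (fun k => v (k + 1) t) 1 x| ≤ 1 / d := by
      simpa using h.abs_expMoment_le htT 1 hd hx
    have hdinv : 0 ≤ 1 / d := by positivity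
    rw [(hasDerivAt_genFun (h.summable htT) (hd.trans_le hx)).deriv, genFun_eq_expMoment, abs_neg,
      NNReal.coe_add, Real.coe_toNNReal _ hdinv, NNReal.coe_ofNat]
    exact ⟨by linarith [abs_sub (expMoment (fun k => v (k + 1) t) 0 x) 1, abs_one (α := ℝ)],
      by linarith⟩
  exists_lipschitz d hd := by
    refine ⟨Real.toNNReal (2 / d ^ 2), fun t ht => ?_⟩
    have htT : t ∈ Icc 0 T := ⟨ht.1, ht.2.trans hτ⟩
    have hderiv : ∀ x ∈ Ici d, HasDerivWithinAt (deriv (genFun v t))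
        (expMoment (fun k => v (k + 1) t) 2 x) (Ici d) x := fun x hx =>
      (hasDerivAt_deriv_genFun (h.summable htT) (hd.trans_le hx)).hasDerivWithinAt
    refine (convex_Ici d).lipschitzOnWith_of_nnnorm_hasDerivWithin_le hderiv fun x hx => ?_
    rw [← NNReal.coe_le_coe, coe_nnnorm, Real.coe_toNNReal _ (by positivity)]
    exact h.abs_expMoment_le htT 2 hd hx
  integral_eq t ht x hx := by
    rw [h.genFun_equation ⟨ht.1, ht.2.trans hτ⟩ hx, hr t ht, mul_zero]

theorem eventually_genFun_add_mul_eq (h : IsBurgersSolution T v r) (hτ : τ ∈ Icc 0 T)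
    (hr : ∀ t ∈ Icc 0 τ, r t = 0) {y : ℝ} (hy : 0 < y) (hyτ : 0 < y + τ * genFun v 0 y) :
    ∀ᶠ z in 𝓝 y, genFun v τ (z + τ * genFun v 0 z) = genFun v 0 z := by
  have h0 := h.summable ⟨le_rfl, hτ.1.trans hτ.2⟩
  filter_upwards [eventually_add_mul_genFun_pos h0 hy hyτ] with z ⟨hz, hzτ⟩
  exact (h.isInviscidBurgersSolution hτ.2 hr).eq_along_characteristic hτ.1 hz hzτ

theorem expMoment_one_characteristic (h : IsBurgersSolution T v r) (hτ : τ ∈ Icc 0 T)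
    (hr : ∀ t ∈ Icc 0 τ, r t = 0) {y : ℝ} (hy : 0 < y) (hyτ : 0 < y + τ * genFun v 0 y) :
    expMoment (fun k => v (k + 1) τ) 1 (y + τ * genFun v 0 y) *
        (1 - τ * expMoment (fun k => v (k + 1) 0) 1 y) =
      expMoment (fun k => v (k + 1) 0) 1 y := by
  have hg := hasDerivAt_genFun (h.summable ⟨le_rfl, hτ.1.trans hτ.2⟩) hy
  have hf := hasDerivAt_genFun (h.summable hτ) hyτ
  have := deriv_mul_one_add_eq_of_comp_eq hf.differentiableAt hg.differentiableAt
    (h.eventually_genFun_add_mul_eq hτ hr hy hyτ)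
  rw [hf.deriv, hg.deriv] at this
  linear_combination -this

theorem expMoment_two_characteristic (h : IsBurgersSolution T v r) (hτ : τ ∈ Icc 0 T)
    (hr : ∀ t ∈ Icc 0 τ, r t = 0) {y : ℝ} (hy : 0 < y) (hyτ : 0 < y + τ * genFun v 0 y) :
    expMoment (fun k => v (k + 1) τ) 2 (y + τ * genFun v 0 y) *
        (1 - τ * expMoment (fun k => v (k + 1) 0) 1 y) ^ 3 =
      expMoment (fun k => v (k + 1) 0) 2 y := by
  have h0 := h.summable ⟨le_rfl, hτ.1.trans hτ.2⟩
  have hg := hasDerivAt_deriv_genFun h0 hy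
  have hf := hasDerivAt_deriv_genFun (h.summable hτ) hyτ
  have := deriv_deriv_mul_one_add_pow_three_eq_of_comp_eq
    (eventually_differentiableAt_genFun (h.summable hτ) hyτ) hf.differentiableAt
    (eventually_differentiableAt_genFun h0 hy) hg.differentiableAt
    (h.eventually_genFun_add_mul_eq hτ hr hy hyτ)
  rwa [hf.deriv, hg.deriv, (hasDerivAt_genFun h0 hy).deriv, mul_neg, ← sub_eq_add_neg] at this

/-- Characteristics do not cross: where `1 + τ ∂ₓV(0,·)` vanished, the first-order transport
identity would force `∂ₓV(0,·) = 0`. -/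
theorem one_sub_mul_expMoment_ne_zero (h : IsBurgersSolution T v r) (hτ : τ ∈ Icc 0 T)
    (hr : ∀ t ∈ Icc 0 τ, r t = 0) {y : ℝ} (hy : 0 < y) (hyτ : 0 < y + τ * genFun v 0 y) :
    1 - τ * expMoment (fun k => v (k + 1) 0) 1 y ≠ 0 := by
  intro hzero
  have h1 := h.expMoment_one_characteristic hτ hr hy hyτ
  rw [hzero, mul_zero] at h1
  rw [← h1] at hzero
  norm_num at hzero

theorem EFun_add_mul_eq (h : IsBurgersSolution T v r) (hτ : τ ∈ Icc 0 T)
    (hr : ∀ t ∈ Icc 0 τ, r t = 0) {y : ℝ} (hy : 0 < y) (hyτ : 0 < y + τ * genFun v 0 y) :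
    EFun v τ (y + τ * genFun v 0 y) = EFun v 0 y := by
  have hne := pow_ne_zero 3 (h.one_sub_mul_expMoment_ne_zero hτ hr hy hyτ)
  rw [EFun_eq_expMoment (h.summable hτ) hyτ,
    EFun_eq_expMoment (h.summable ⟨le_rfl, hτ.1.trans hτ.2⟩) hy,
    ← mul_div_mul_right _ _ hne, ← mul_pow, h.expMoment_one_characteristic hτ hr hy hyτ,
    h.expMoment_two_characteristic hτ hr hy hyτ]

theorem differentiableAt_EFun_add_mul (h : IsBurgersSolution T v r) (hτ : τ ∈ Icc 0 T)
    (hr : ∀ t ∈ Icc 0 τ, r t = 0) {y : ℝ} (hy : 0 < y) (hyτ : 0 < y + τ * genFun v 0 y)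
    (h2 : expMoment (fun k => v (k + 1) 0) 2 y ≠ 0) :
    DifferentiableAt ℝ (EFun v τ) (y + τ * genFun v 0 y) := by
  rw [← h.expMoment_two_characteristic hτ hr hy hyτ] at h2
  exact (hasDerivAt_EFun (h.summable hτ) hyτ (left_ne_zero_of_mul h2)).differentiableAt

theorem deriv_EFun_add_mul (h : IsBurgersSolution T v r) (hτ : τ ∈ Icc 0 T)
    (hr : ∀ t ∈ Icc 0 τ, r t = 0) {y : ℝ} (hy : 0 < y) (hyτ : 0 < y + τ * genFun v 0 y)
    (h2 : expMoment (fun k => v (k + 1) 0) 2 y ≠ 0) :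
    deriv (EFun v τ) (y + τ * genFun v 0 y) *
        (1 - τ * expMoment (fun k => v (k + 1) 0) 1 y) = deriv (EFun v 0) y := by
  have h0 := h.summable ⟨le_rfl, hτ.1.trans hτ.2⟩
  have hφ := (hasDerivAt_id y).add ((hasDerivAt_genFun h0 hy).const_mul τ)
  have hcomp := (h.differentiableAt_EFun_add_mul hτ hr hy hyτ h2).hasDerivAt.comp y hφ
  rw [mul_neg, ← sub_eq_add_neg] at hcomp
  refine (hcomp.congr_of_eventuallyEq ?_).deriv.symm
  filter_upwards [eventually_add_mul_genFun_pos h0 hy hyτ] with z ⟨hz, hzτ⟩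
  exact (h.EFun_add_mul_eq hτ hr hz hzτ).symm

end IsBurgersSolution

theorem gelMap_eq_add_mul_genFun {v : ℕ → ℝ → ℝ} {t : ℝ} (h : HasSum (fun k => v (k + 1) t) 1)
    (x : ℝ) : gelMap (fun k => v (k + 1) t) x =
      x + (expMoment (fun k => v (k + 1) t) 1 0)⁻¹ * genFun v t x := by
  rw [gelMap, genFun_eq_expMoment, expMoment_zero_zero, h.tsum_eq]

theorem exists_pos_of_tsum_pos {ι : Type*} {a : ι → ℝ} (h : 0 < ∑' k, a k) : ∃ k, 0 < a k := by
  contrapose! h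
  exact tsum_nonpos h

theorem abs_mul_sqrt_le_of_mul_eq {D D₀ K M q x y : ℝ} (hy : 0 < y) (hK : |D₀| ≤ K * Real.exp (-y))
    (hq : y * Real.exp (-y) ≤ q) (hD : D * q = D₀) (hx : x ≤ M * y ^ 2) (hM : 0 ≤ M) :
    |D| * √x ≤ K * √M := by
  have hDy : |D| * y ≤ K := by
    refine le_of_mul_le_mul_right ?_ (Real.exp_pos (-y))
    calc |D| * y * Real.exp (-y) = |D| * (y * Real.exp (-y)) := mul_assoc _ _ _
      _ ≤ |D| * |q| := by gcongr; exact hq.trans (le_abs_self q)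
      _ = |D₀| := by rw [← abs_mul, hD]
      _ ≤ K * Real.exp (-y) := hK
  calc |D| * √x ≤ |D| * √(M * y ^ 2) := by gcongr
    _ = |D| * y * √M := by rw [Real.sqrt_mul hM, Real.sqrt_sq hy.le]; ring
    _ ≤ K * √M := by gcongr

theorem IsBurgersSolution.exists_abs_deriv_EFun_gelMap_mul_sqrt_le {T : ℝ} {v : ℕ → ℝ → ℝ}
    {r : ℝ → ℝ} (hsol : IsBurgersSolution T v r) (h0 : HasSum (fun k => v (k + 1) 0) 1)
    (hm3 : Summable fun k : ℕ => ((k : ℝ) + 1) ^ 3 * v (k + 1) 0) {τ : ℝ}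
    (hτ : τ = (expMoment (fun k => v (k + 1) 0) 1 0)⁻¹) (hτT : τ ∈ Icc 0 T)
    (hr : ∀ t ∈ Icc 0 τ, r t = 0) :
    ∃ C, ∀ y, 0 < y → DifferentiableAt ℝ (EFun v τ) (gelMap (fun k => v (k + 1) 0) y) ∧
      |deriv (EFun v τ) (gelMap (fun k => v (k + 1) 0) y)| * √(gelMap (fun k => v (k + 1) 0) y) ≤
        C := by
  set a : ℕ → ℝ := fun k => v (k + 1) 0
  have ha : ∀ k, 0 ≤ a k := hsol.nonneg ⟨le_rfl, hτT.1.trans hτT.2⟩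
  have h1 := summable_pow_mul_of_le ha (show 1 ≤ 3 by norm_num) hm3
  have h2 := summable_pow_mul_of_le ha (show 2 ≤ 3 by norm_num) hm3
  obtain ⟨k, hk⟩ := exists_pos_of_tsum_pos (h0.tsum_eq.symm ▸ one_pos)
  have hm1 : 0 < expMoment a 1 0 := (expMoment_pos ha h0.summable hk 1 one_pos).trans_le
    (expMoment_le_expMoment_zero ha h1 one_pos)
  refine ⟨(3 * expMoment a 1 0 + expMoment a 3 0) * expMoment a 1 0 *
    √(expMoment a 2 0 / expMoment a 1 0), fun y hy => ?_⟩
  have hgel : gelMap a y = y + τ * genFun v 0 y := by rw [hτ, gelMap_eq_add_mul_genFun h0]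
  have hpos : 0 < y + τ * genFun v 0 y := hgel ▸ gelMap_pos ha h1 hm1 hy
  have hD2 : expMoment a 2 y ≠ 0 := (expMoment_pos ha h0.summable hk 2 hy).ne'
  have hslope : y * Real.exp (-y) ≤ 1 - τ * expMoment a 1 y :=
    hτ ▸ mul_exp_neg_le_deriv_gelMap ha h1 hm1 hy
  have hquad := gelMap_le ha h2 hm1 hy
  rw [hgel] at hquad ⊢
  exact ⟨hsol.differentiableAt_EFun_add_mul hτT hr hy hpos hD2,
    abs_mul_sqrt_le_of_mul_eq hy (abs_deriv_EFun_le ha hm3 hy hD2) hslope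
      (hsol.deriv_EFun_add_mul hτT hr hy hpos hD2) hquad
      (div_nonneg (expMoment_nonneg ha 2 0) hm1.le)⟩

theorem EFun_deriv_bound_at_gelation_general {T : ℝ} (hT : 0 ≤ T) {v : ℕ → ℝ → ℝ} {r : ℝ → ℝ}
    {Tgel : ℝ} (hsol : IsBurgersSolution T v r) (h0 : HasSum (fun k : ℕ => v (k + 1) 0) 1)
    (hm3 : Summable (fun k : ℕ => ((k : ℝ) + 1) ^ 3 * v (k + 1) 0))
    (hTgel : Tgel = (∑' k : ℕ, ((k : ℝ) + 1) * v (k + 1) 0)⁻¹) (hTgelT : Tgel ≤ T)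
    (hr0 : ∀ t ∈ Icc (0 : ℝ) Tgel, r t = 0) :
    ∃ C : ℝ, ∀ x, 0 < x →
      DifferentiableAt ℝ (EFun v Tgel) x ∧ |deriv (EFun v Tgel) x| ≤ C * x ^ (-(1 : ℝ) / 2) := by
  have ha := hsol.nonneg (left_mem_Icc.2 hT)
  have hm1 : Tgel = (expMoment (fun k => v (k + 1) 0) 1 0)⁻¹ := by
    simp only [hTgel, expMoment_zero_right, pow_one]
  have hTgel0 : 0 ≤ Tgel := hm1 ▸ inv_nonneg.2 (expMoment_nonneg ha 1 0)
  obtain ⟨C, hC⟩ :=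
    hsol.exists_abs_deriv_EFun_gelMap_mul_sqrt_le h0 hm3 hm1 ⟨hTgel0, hTgelT⟩ hr0
  refine ⟨C, fun x hx => ?_⟩
  obtain ⟨y, hy, rfl⟩ := exists_gelMap_eq ha h0.summable hx
  refine ⟨(hC y hy).1, ?_⟩
  rw [neg_div, Real.rpow_neg hx.le, ← Real.sqrt_eq_rpow, ← div_eq_mul_inv,
    le_div_iff₀ (Real.sqrt_pos.2 hx)]
  exact (hC y hy).2

/-- for a conservative solution with `0 < ∑ k v_k(0) < ∞`,
`∑ k³ v_k(0) < ∞`, `T ≥ T_gel` and vanishing control on `[0, T_gel]`, the spatial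
derivative of `E` at the gelation time satisfies `|∂ₓE(T_gel, x)| ≤ C·x^(−1/2)`. -/
theorem EFun_deriv_bound_at_gelation (T : ℝ) (hT : 0 < T) (v : ℕ → ℝ → ℝ) (r : ℝ → ℝ)
    (Tgel : ℝ)
    (hsol : IsBurgersSolution T v r)
    (hcons : ∀ t ∈ Set.Icc (0:ℝ) T, HasSum (fun k : ℕ => v (k + 1) t) 1)
    (hm1 : Summable (fun k : ℕ => ((k : ℝ) + 1) * v (k + 1) 0))
    (hm1pos : 0 < ∑' k : ℕ, ((k : ℝ) + 1) * v (k + 1) 0)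
    (hm3 : Summable (fun k : ℕ => ((k : ℝ) + 1) ^ 3 * v (k + 1) 0))
    (hTgel : Tgel = (∑' k : ℕ, ((k : ℝ) + 1) * v (k + 1) 0)⁻¹)
    (hTgelT : Tgel ≤ T)
    (hr0 : ∀ t ∈ Set.Icc (0:ℝ) Tgel, r t = 0) :
    ∀ xbar : ℝ, 0 < xbar → ∃ C : ℝ, ∀ x ∈ Set.Ioc (0:ℝ) xbar,
      |deriv (fun y => EFun v Tgel y) x| ≤ C * x ^ (-(1:ℝ)/2) := by
  obtain ⟨C, hC⟩ := EFun_deriv_bound_at_gelation_general hT.le hsol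
    (hcons 0 (left_mem_Icc.2 hT.le)) hm3 hTgel hTgelT hr0
  exact fun _ _ => ⟨C, fun x hx => (hC x hx.1).2⟩
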